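/- Let p ≥ 1 and let f : [0,1] → ℝ be any function. Then for every integer n ≥ 1, ||f||_{[0,1],p}^p ≤ Σ_{k=1}^n ||f||_{[(k-1)/n, k/n],p}^p + n · ||f||_ω^p, where ||f||_ω = sup_{0 ≤ s < t ≤ 1} |f(t) − f(s)| is the oscillation of f on [0,1]. -/

import Mathlib

/-!
Given a partition of `[a,b]` and a point `c`, at most one increment of the partition crosses `c`.
The increments before it form a partition of `[a,c]`, those after it a partition of `[c,b]`, and
the crossing one is bounded by the oscillation. Hence
`‖f‖_{[a,b],p}^p ≤ ‖f‖_{[a,c],p}^p + ‖f‖_{[c,b],p}^p + ‖f‖_ω^p` (`pVarP_le_add_add_osc`), and the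
theorem follows by splitting `[0, m/n]` at `(m-1)/n`, by induction on `m`.
-/

open MeasureTheory ProbabilityTheory Filter Topology
open scoped ENNReal NNReal

/-- The p-th power of the strong p-variation of `f` over `[a,b]`:
`sup` over all finite monotone sequences in `[a,b]` of the sums `Σ |f(t_j) - f(t_{j-1})|^p`. -/
noncomputable def pVarP (p a b : ℝ) (f : ℝ → ℝ) : ℝ≥0∞ :=
  ⨆ (n : ℕ) (t : Fin (n + 1) → ℝ) (_ : Monotone t) (_ : ∀ i, t i ∈ Set.Icc a b),
    ∑ i : Fin n, ENNReal.ofReal (|f (t i.succ) - f (t i.castSucc)| ^ p)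

/-- The strong p-variation seminorm of `f` over `[a,b]`. -/
noncomputable def pVar (p a b : ℝ) (f : ℝ → ℝ) : ℝ≥0∞ :=
  pVarP p a b f ^ (1 / p)

/-- The oscillation `sup_{0 ≤ s < t ≤ 1} |f t - f s|` of `f` on `[0,1]`. -/
noncomputable def oscSN (f : ℝ → ℝ) : ℝ≥0∞ :=
  ⨆ (s : ℝ) (t : ℝ) (_ : 0 ≤ s) (_ : s < t) (_ : t ≤ 1), ENNReal.ofReal |f t - f s|

/-- A consecutive block of a monotone sequence, contained in `[a,b]`, is admissible in the supremum
defining `pVarP`; this replaces partitions indexed by `Fin` with sums over `Finset.Ico`. -/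
lemma sum_Ico_le_pVarP (p a b : ℝ) (f : ℝ → ℝ) (s : ℕ → ℝ) (hs : Monotone s) (u v : ℕ)
    (h : ∀ i, u ≤ i → i ≤ v → s i ∈ Set.Icc a b) :
    ∑ i ∈ Finset.Ico u v, ENNReal.ofReal (|f (s (i + 1)) - f (s i)| ^ p) ≤ pVarP p a b f := by
  rcases lt_or_ge v u with huv | huv
  · simp [Finset.Ico_eq_empty_of_le huv.le]
  rw [Finset.sum_Ico_eq_sum_range, Finset.sum_range]
  unfold pVarP
  refine le_trans (le_of_eq ?_) (le_iSup₂_of_le (v - u) (fun i => s (u + i))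
    (le_iSup₂_of_le (fun i j hij => hs (by simpa using hij))
      (fun i => h _ (by omega) (by omega)) le_rfl))
  simp [add_assoc]

lemma ofReal_rpow_le_osc (p : ℝ) (hp : 0 ≤ p) (f : ℝ → ℝ) {x y : ℝ} (hx : 0 ≤ x) (hxy : x < y)
    (hy : y ≤ 1) : ENNReal.ofReal (|f y - f x| ^ p) ≤ oscSN f ^ p := by
  rw [← ENNReal.ofReal_rpow_of_nonneg (abs_nonneg _) hp]
  gcongr
  unfold oscSN
  exact le_iSup₂_of_le x y (le_iSup₂_of_le hx hxy (le_iSup_of_le hy le_rfl))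

/-- Splitting the interval at `c` costs at most one increment, the one crossing `c`. -/
lemma pVarP_le_add_add_osc (p : ℝ) (hp : 0 ≤ p) (f : ℝ → ℝ) {a b : ℝ} (c : ℝ) (ha : 0 ≤ a)
    (hb : b ≤ 1) : pVarP p a b f ≤ pVarP p a c f + pVarP p c b f + oscSN f ^ p := by
  conv_lhs => unfold pVarP
  refine iSup₂_le fun m t => iSup₂_le fun ht hI => ?_
  -- extend the partition to a monotone sequence on `ℕ`, constant from index `m` on
  obtain ⟨s, hs, hsI, hst⟩ : ∃ s : ℕ → ℝ, Monotone s ∧ (∀ i, s i ∈ Set.Icc a b) ∧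
      ∑ i : Fin m, ENNReal.ofReal (|f (t i.succ) - f (t i.castSucc)| ^ p) =
        ∑ i ∈ Finset.Ico 0 m, ENNReal.ofReal (|f (s (i + 1)) - f (s i)| ^ p) := by
    refine ⟨fun i => t ⟨min i m, by omega⟩, fun i j hij => ht ?_, fun i => hI _, ?_⟩
    · exact Fin.mk_le_mk.2 (min_le_min_right _ hij)
    · rw [← Finset.range_eq_Ico, Finset.sum_range]
      refine Finset.sum_congr rfl fun i _ => ?_
      have h1 : (⟨min (i.1 + 1) m, by omega⟩ : Fin (m + 1)) = i.succ := by
        ext; simp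
      have h2 : (⟨min i.1 m, by omega⟩ : Fin (m + 1)) = i.castSucc := by
        ext; simp
      simp only [h1, h2]
  rw [hst]
  by_cases hex : ∃ k, c < s k ∧ k ≤ m
  · classical
    obtain ⟨hk, hkm⟩ := Nat.find_spec hex
    have hmin := fun j => @Nat.find_min _ _ hex j
    generalize Nat.find hex = k at hk hkm hmin
    rcases k with _ | j
    · refine (sum_Ico_le_pVarP p c b f s hs 0 m fun i hi _ =>
        ⟨hk.le.trans (hs hi), (hsI i).2⟩).trans ?_
      exact le_add_self.trans le_self_add
    · have hj : s j ≤ c := by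
        by_contra hc
        exact hmin j (by omega) ⟨not_le.1 hc, by omega⟩
      rw [← Finset.sum_Ico_consecutive _ (Nat.zero_le (j + 1)) hkm,
        Finset.sum_Ico_succ_top (Nat.zero_le j), add_right_comm]
      gcongr
      · exact sum_Ico_le_pVarP p a c f s hs 0 j fun i _ hi => ⟨(hsI i).1, (hs hi).trans hj⟩
      · exact sum_Ico_le_pVarP p c b f s hs (j + 1) m fun i hi _ =>
          ⟨hk.le.trans (hs hi), (hsI i).2⟩
      · exact ofReal_rpow_le_osc p hp f (ha.trans (hsI j).1) (hj.trans_lt hk)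
          ((hsI (j + 1)).2.trans hb)
  · push Not at hex
    refine (sum_Ico_le_pVarP p a c f s hs 0 m fun i _ hi => ⟨(hsI i).1, ?_⟩).trans ?_
    · by_contra hc
      exact absurd (hex i (not_le.1 hc)) (by omega)
    · exact le_self_add.trans le_self_add

lemma pVarP_self (p : ℝ) (hp : 0 < p) (f : ℝ → ℝ) (a : ℝ) : pVarP p a a f = 0 := by
  unfold pVarP
  simp only [ENNReal.iSup_eq_zero]
  intro m t _ hI
  have h : ∀ i, t i = a := fun i => by simpa using hI i
  simp [h, Real.zero_rpow hp.ne']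

/-- for `p ≥ 1`, any `f : [0,1] → ℝ` and any `n ≥ 1`,
`‖f‖_{[0,1],p}^p ≤ Σ_{k=1}^n ‖f‖_{[(k-1)/n, k/n],p}^p + n ⬝ ‖f‖_ω^p`. -/
theorem pVarP_le_sum_add_osc (p : ℝ) (hp : 1 ≤ p) (f : ℝ → ℝ) (n : ℕ) (hn : 1 ≤ n) :
    pVarP p 0 1 f ≤
      (∑ k ∈ Finset.range n, pVarP p ((k : ℝ) / n) (((k : ℝ) + 1) / n) f)
        + (n : ℝ≥0∞) * (oscSN f) ^ p := by
  have hn0 : (0 : ℝ) < n := by exact_mod_cast hn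
  have key : ∀ m : ℕ, m ≤ n → pVarP p 0 ((m : ℝ) / n) f ≤
      (∑ k ∈ Finset.range m, pVarP p ((k : ℝ) / n) (((k : ℝ) + 1) / n) f)
        + (m : ℝ≥0∞) * (oscSN f) ^ p := by
    intro m
    induction m with
    | zero => intro _; simp [pVarP_self p (by linarith) f 0]
    | succ m ih =>
      intro hm
      have hb : ((m + 1 : ℕ) : ℝ) / n ≤ 1 := by
        rw [div_le_one hn0]; exact_mod_cast hm
      refine (pVarP_le_add_add_osc p (by linarith) f ((m : ℝ) / n) le_rfl hb).trans ?_
      rw [Finset.sum_range_succ]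
      push_cast
      calc _ ≤ _ := add_le_add_left (add_le_add_left (ih (by omega)) _) _
        _ = _ := by ring
  simpa [div_self hn0.ne'] using key n le_rfl
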